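/- There exists a constant C > 0 such that for all natural numbers n ≥ 1, |S_{9,0}(n)| ≤ C · n^{ln 3 / ln 4}, i.e. S_{9,0}(n) = O(n^{0.79248...}), the same exponent as for S_{3,0}(n). -/

import Mathlib

/-- The Newman sum `S_{m,l}(x) = ∑_{0 ≤ n < x, n ≡ l (mod m)} (-1)^{σ(n)}`,
where `σ(n)` is the sum of the binary digits of `n`. -/
def newmanSum (m l x : ℕ) : ℤ :=
  ∑ n ∈ Finset.range x, if n % m = l then (-1 : ℤ) ^ ((Nat.digits 2 n).sum) else 0

/-!
A residue class modulo `m` is detected by the `m`-th roots of unity, so it suffices to bound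
`F z x = ∑ n < x, (-1) ^ σ(n) * z ^ n` at each of them. Splitting off the last binary digit gives
`F z (2 * x) = (1 - z) * F (z ^ 2) x`. If `z` is a primitive `q`-th root of unity and `2` is a
primitive root modulo `q`, then `φ q` splittings run through all primitive `q`-th roots of unity
and give `F z (2 ^ φ q * x) = Φ_q(1) * F z x`. For `q ≠ 1` a power of the prime `p` the multiplier
`Φ_q(1)` is `p`, whence `F z x = O(x ^ (log p / log (2 ^ φ q)))`, while `F 1` is bounded. The
largest exponent comes from `q = p`, whatever the power of `p` dividing `m`. The modulus `9` is the
case `p = 3`.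
-/

open Finset Filter Asymptotics Polynomial
open scoped Nat

section Growth

variable {E : Type*} [SeminormedAddCommGroup E] {f : ℕ → E} {b : ℕ} {B K : ℝ}

lemma exists_norm_le_mul_rpow_logb (hb : 1 < b) (hB : 1 < B)
    (hmul : ∀ x, ‖f (b * x)‖ ≤ B * ‖f x‖) (hdiv : ∀ n, ‖f n - f (b * (n / b))‖ ≤ K) :
    ∃ C, ∀ n, 1 ≤ n → ‖f n‖ ≤ C * (n : ℝ) ^ Real.logb b B := by
  set α := Real.logb b B
  have hb' : (1 : ℝ) < b := mod_cast hb
  have hα : 0 ≤ α := Real.logb_nonneg hb' hB.le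
  have hbα : (b : ℝ) ^ α = B := Real.rpow_logb (by linarith) hb'.ne' (by linarith)
  have hK : 0 ≤ K := (norm_nonneg _).trans (hdiv 0)
  have norm_le (n : ℕ) : ‖f n‖ ≤ ‖f (b * (n / b))‖ + K :=
    norm_le_norm_add_const_of_dist_le ((dist_eq_norm _ _).trans_le (hdiv n))
  -- The error `K` of each step is absorbed by strengthening the bound by `c`, where `B c = c + K`.
  obtain ⟨c, hc, hcK⟩ : ∃ c, 0 ≤ c ∧ B * c = c + K :=
    ⟨K / (B - 1), div_nonneg hK (by linarith), by field_simp [(sub_pos.2 hB).ne']; ring⟩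
  suffices h : ∀ n : ℕ, 1 ≤ n → ‖f n‖ ≤ (‖f 0‖ + K + c) * (n : ℝ) ^ α - c from
    ⟨_, fun n hn => (h n hn).trans (sub_le_self _ hc)⟩
  intro n
  induction n using Nat.strong_induction_on with
  | _ n ih =>
    intro hn
    rcases lt_or_ge n b with hnb | hbn
    · have hfn : ‖f n‖ ≤ ‖f 0‖ + K := by simpa [Nat.div_eq_of_lt hnb] using norm_le n
      have hpow : 1 ≤ (n : ℝ) ^ α := Real.one_le_rpow (mod_cast hn) hα
      nlinarith [norm_nonneg (f 0)]
    · have hquot := ih (n / b) (Nat.div_lt_self hn hb) (Nat.div_pos hbn (by omega))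
      have hpow : B * ((n / b : ℕ) : ℝ) ^ α ≤ (n : ℝ) ^ α := by
        rw [← hbα, ← Real.mul_rpow (by positivity) (by positivity)]
        exact Real.rpow_le_rpow (by positivity) (mod_cast Nat.mul_div_le n b) hα
      calc ‖f n‖ ≤ B * ‖f (n / b)‖ + K := (norm_le n).trans (by grw [hmul])
        _ ≤ B * ((‖f 0‖ + K + c) * ((n / b : ℕ) : ℝ) ^ α - c) + K := by gcongr
        _ = (‖f 0‖ + K + c) * (B * ((n / b : ℕ) : ℝ) ^ α) - c := by linear_combination -hcK
        _ ≤ (‖f 0‖ + K + c) * (n : ℝ) ^ α - c := by gcongr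

lemma isBigO_rpow_logb (hb : 1 < b) (hB : 1 < B)
    (hmul : ∀ x, ‖f (b * x)‖ ≤ B * ‖f x‖) (hdiv : ∀ n, ‖f n - f (b * (n / b))‖ ≤ K) :
    f =O[atTop] fun n : ℕ => (n : ℝ) ^ Real.logb b B := by
  obtain ⟨C, hC⟩ := exists_norm_le_mul_rpow_logb hb hB hmul hdiv
  refine IsBigO.of_bound C (eventually_atTop.2 ⟨1, fun n hn => ?_⟩)
  simpa only [Real.norm_of_nonneg (Real.rpow_nonneg n.cast_nonneg _)] using hC n hn

lemma isBigO_natCast_rpow_of_le {a c : ℝ} (hac : a ≤ c) :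
    (fun n : ℕ => (n : ℝ) ^ a) =O[atTop] fun n : ℕ => (n : ℝ) ^ c := by
  refine Eventually.isBigO (eventually_atTop.2 ⟨1, fun n hn => ?_⟩)
  rw [Real.norm_of_nonneg (by positivity)]
  exact Real.rpow_le_rpow_of_exponent_le (mod_cast hn) hac

end Growth

section Cyclotomic

lemma coprime_of_orderOf_eq_totient {g m : ℕ} [NeZero m] (hg : orderOf (g : ZMod m) = φ m) :
    g.Coprime m := by
  have hfin : IsOfFinOrder (g : ZMod m) :=
    orderOf_pos_iff.1 (hg ▸ Nat.totient_pos.2 (NeZero.pos m))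
  exact (ZMod.isUnit_iff_coprime g m).1 hfin.isUnit

lemma orderOf_eq_totient_of_dvd {g d m : ℕ} [NeZero m] (hdm : d ∣ m)
    (hg : orderOf (g : ZMod m) = φ m) : orderOf (g : ZMod d) = φ d := by
  have : NeZero d := ⟨ne_zero_of_dvd_ne_zero (NeZero.ne m) hdm⟩
  let u := ZMod.unitOfCoprime g (coprime_of_orderOf_eq_totient hg)
  have hu : Subgroup.zpowers u = ⊤ := Subgroup.eq_top_of_card_eq _ <| by
    rw [Nat.card_zpowers, ← orderOf_units, ZMod.coe_unitOfCoprime, hg, Nat.card_eq_fintype_card,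
      ZMod.card_units_eq_totient]
  have hgen : Subgroup.zpowers (ZMod.unitsMap hdm u) = ⊤ := by
    rw [← MonoidHom.map_zpowers, hu,
      Subgroup.map_top_of_surjective _ (ZMod.unitsMap_surjective hdm)]
  have hval : (ZMod.unitsMap hdm u : ZMod d) = g := by simp [ZMod.unitsMap_def, u]
  rw [← hval, orderOf_units, orderOf_eq_card_of_zpowers_eq_top hgen, Nat.card_eq_fintype_card,
    ZMod.card_units_eq_totient]

variable {R : Type*} [CommRing R] {z : R} {g m : ℕ} [NeZero m]

lemma injOn_pow_pow (hz : IsPrimitiveRoot z m) (hg : orderOf (g : ZMod m) = φ m) :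
    Set.InjOn (fun i => z ^ g ^ i) (range (φ m)) := fun i hi j hj hij => by
  have hmod : g ^ i ≡ g ^ j [MOD m] := by
    rwa [(hz.isOfFinOrder (NeZero.ne m)).pow_eq_pow_iff_modEq, ← hz.eq_orderOf] at hij
  have hpow : (g : ZMod m) ^ i = (g : ZMod m) ^ j :=
    mod_cast (ZMod.natCast_eq_natCast_iff _ _ _).2 hmod
  exact pow_injOn_Iio_orderOf (by simpa [hg] using hi) (by simpa [hg] using hj) hpow

variable [IsDomain R]

lemma image_pow_pow_eq_primitiveRoots [DecidableEq R] (hz : IsPrimitiveRoot z m)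
    (hg : orderOf (g : ZMod m) = φ m) :
    (range (φ m)).image (fun i => z ^ g ^ i) = primitiveRoots m R := by
  refine eq_of_subset_of_card_le (image_subset_iff.2 fun i _ => ?_) ?_
  · exact (mem_primitiveRoots (NeZero.pos m)).2
      (hz.pow_of_coprime _ ((coprime_of_orderOf_eq_totient hg).pow_left i))
  · rw [hz.card_primitiveRoots, card_image_of_injOn (injOn_pow_pow hz hg), card_range]

lemma cyclotomic_eq_prod_X_sub_C_pow_pow (hz : IsPrimitiveRoot z m)
    (hg : orderOf (g : ZMod m) = φ m) :
    cyclotomic m R = ∏ i ∈ range (φ m), (X - C (z ^ g ^ i)) := by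
  classical
  rw [cyclotomic_eq_prod_X_sub_primitiveRoots hz, ← image_pow_pow_eq_primitiveRoots hz hg,
    prod_image (injOn_pow_pow hz hg)]

lemma prod_one_sub_pow_pow_eq_prime {p k : ℕ} [Fact p.Prime] (hz : IsPrimitiveRoot z (p ^ (k + 1)))
    (hg : orderOf (g : ZMod (p ^ (k + 1))) = φ (p ^ (k + 1))) :
    ∏ i ∈ range (φ (p ^ (k + 1))), (1 - z ^ g ^ i) = p := by
  have h := congrArg (eval 1) (cyclotomic_eq_prod_X_sub_C_pow_pow hz hg)
  rw [eval_one_cyclotomic_prime_pow] at h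
  simpa [eval_prod] using h.symm

end Cyclotomic

section ThueMorse

/-- The Thue–Morse sequence `(-1) ^ σ(n)` with values `1` and `-1`. -/
def thueMorseSign (n : ℕ) : ℤ := (-1) ^ (Nat.digits 2 n).sum

lemma thueMorseSign_two_mul (n : ℕ) : thueMorseSign (2 * n) = thueMorseSign n := by
  rcases n.eq_zero_or_pos with rfl | hn
  · rfl
  · simp [thueMorseSign, Nat.digits_base_mul one_lt_two hn]

lemma thueMorseSign_two_mul_add_one (n : ℕ) : thueMorseSign (2 * n + 1) = -thueMorseSign n := by
  have hdigits : Nat.digits 2 (2 * n + 1) = 1 :: Nat.digits 2 n := by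
    rw [add_comm]
    exact Nat.digits_add 2 one_lt_two 1 n one_lt_two (Or.inl one_ne_zero)
  rw [thueMorseSign, hdigits, List.sum_cons, pow_add, pow_one, neg_one_mul, thueMorseSign]

/-- The partial sum `∑ n < x, (-1) ^ σ(n) * z ^ n` of the Thue–Morse power series. At a root of
unity `z` it is the exponential sum twisted by the Thue–Morse sequence. -/
def thueMorseSum {R : Type*} [CommRing R] (z : R) (x : ℕ) : R :=
  ∑ n ∈ range x, (thueMorseSign n : R) * z ^ n

lemma thueMorseSum_two_mul {R : Type*} [CommRing R] (z : R) (x : ℕ) :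
    thueMorseSum z (2 * x) = (1 - z) * thueMorseSum (z ^ 2) x := by
  induction x with
  | zero => simp [thueMorseSum]
  | succ x ih =>
    have hsplit : thueMorseSum z (2 * (x + 1)) = thueMorseSum z (2 * x)
        + thueMorseSign (2 * x) * z ^ (2 * x) + thueMorseSign (2 * x + 1) * z ^ (2 * x + 1) := by
      simp only [thueMorseSum, mul_add_one, sum_range_succ]
    have hlast : thueMorseSum (z ^ 2) (x + 1) =
        thueMorseSum (z ^ 2) x + thueMorseSign x * (z ^ 2) ^ x := sum_range_succ _ _
    rw [hsplit, hlast, ih, thueMorseSign_two_mul, thueMorseSign_two_mul_add_one]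
    push_cast
    ring

lemma thueMorseSum_two_pow_mul {R : Type*} [CommRing R] (z : R) (k x : ℕ) :
    thueMorseSum z (2 ^ k * x) =
      (∏ i ∈ range k, (1 - z ^ 2 ^ i)) * thueMorseSum (z ^ 2 ^ k) x := by
  induction k generalizing x with
  | zero => simp
  | succ k ih =>
    rw [pow_succ, mul_assoc, ih, thueMorseSum_two_mul, prod_range_succ, pow_mul, mul_assoc]

lemma norm_thueMorseSum_sub_le {R : Type*} [NormedCommRing R] [NormOneClass R] {z : R}
    (hz : ‖z‖ ≤ 1) {x y : ℕ} (hxy : x ≤ y) :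
    ‖thueMorseSum z y - thueMorseSum z x‖ ≤ (y - x : ℕ) := by
  have hterm (n : ℕ) : ‖(thueMorseSign n : R) * z ^ n‖ ≤ 1 := by
    have hpow : ‖z ^ n‖ ≤ 1 := (norm_pow_le z n).trans (pow_le_one₀ (norm_nonneg z) hz)
    rcases neg_one_pow_eq_or ℤ (Nat.digits 2 n).sum with h | h <;> simpa [thueMorseSign, h]
  rw [thueMorseSum, thueMorseSum, ← sum_Ico_eq_sub _ hxy]
  simpa using norm_sum_le_of_le (Ico x y) fun n _ => hterm n

lemma thueMorseSum_isBigO {R : Type*} [NormedCommRing R] [NormOneClass R] {z : R} {k : ℕ} {B : ℝ}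
    (hz : ‖z‖ ≤ 1) (hk : k ≠ 0) (hB : 1 < B) (hfix : z ^ 2 ^ k = z)
    (hprod : ‖∏ i ∈ range k, (1 - z ^ 2 ^ i)‖ ≤ B) :
    thueMorseSum z =O[atTop] fun n : ℕ => (n : ℝ) ^ Real.logb (2 ^ k) B := by
  have hmul (x : ℕ) : ‖thueMorseSum z (2 ^ k * x)‖ ≤ B * ‖thueMorseSum z x‖ := by
    rw [thueMorseSum_two_pow_mul, hfix]
    exact (norm_mul_le _ _).trans (by gcongr)
  have hdiv (n : ℕ) :
      ‖thueMorseSum z n - thueMorseSum z (2 ^ k * (n / 2 ^ k))‖ ≤ (2 ^ k : ℕ) := by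
    refine (norm_thueMorseSum_sub_le hz (Nat.mul_div_le _ _)).trans (mod_cast ?_)
    rw [← Nat.mod_eq_sub_mul_div]
    exact (Nat.mod_lt n (by positivity)).le
  exact_mod_cast isBigO_rpow_logb (one_lt_pow₀ one_lt_two hk) hB hmul hdiv

end ThueMorse

section PrimePower

variable {p k : ℕ} [Fact p.Prime]

lemma thueMorseSum_one_isBigO :
    thueMorseSum (1 : ℂ) =O[atTop] fun n : ℕ => (n : ℝ) ^ Real.logb (2 ^ (p - 1)) p := by
  have hp : 1 < p := Fact.out (p := p.Prime).one_lt
  have hk : p - 1 ≠ 0 := by omega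
  exact thueMorseSum_isBigO norm_one.le hk (mod_cast hp) (one_pow _) (by simp [hk])

lemma logb_two_pow_totient_le :
    Real.logb (2 ^ φ (p ^ (k + 1))) p ≤ Real.logb (2 ^ (p - 1)) p := by
  have hp : 1 < p := Fact.out (p := p.Prime).one_lt
  have hle : p - 1 ≤ φ (p ^ (k + 1)) := by
    rw [Nat.totient_prime_pow_succ Fact.out]
    exact Nat.le_mul_of_pos_left _ (by positivity)
  refine div_le_div_of_nonneg_left (Real.log_nonneg (mod_cast hp.le))
    (Real.log_pos (one_lt_pow₀ one_lt_two (by omega))) ?_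
  gcongr
  exact one_le_two

lemma thueMorseSum_isBigO_of_isPrimitiveRoot {z : ℂ} (hz : IsPrimitiveRoot z (p ^ k))
    (h2 : orderOf (2 : ZMod (p ^ k)) = φ (p ^ k)) :
    thueMorseSum z =O[atTop] fun n : ℕ => (n : ℝ) ^ Real.logb (2 ^ (p - 1)) p := by
  have hp : p.Prime := Fact.out
  have : NeZero p := ⟨hp.ne_zero⟩
  rcases k with _ | k
  · obtain rfl : z = 1 := by simpa using hz
    exact thueMorseSum_one_isBigO
  have hg : orderOf ((2 : ℕ) : ZMod (p ^ (k + 1))) = φ (p ^ (k + 1)) := mod_cast h2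
  have hmod : 2 ^ φ (p ^ (k + 1)) ≡ 1 [MOD orderOf z] := by
    rw [← hz.eq_orderOf]
    exact Nat.ModEq.pow_totient (coprime_of_orderOf_eq_totient hg)
  have hfix : z ^ 2 ^ φ (p ^ (k + 1)) = z := by
    rw [(hz.isOfFinOrder (NeZero.ne _)).pow_eq_pow_iff_modEq.2 hmod, pow_one]
  have hprod : ‖∏ i ∈ range (φ (p ^ (k + 1))), (1 - z ^ 2 ^ i)‖ ≤ p := by
    rw [prod_one_sub_pow_pow_eq_prime hz hg, Complex.norm_natCast]
  have hφ : φ (p ^ (k + 1)) ≠ 0 := (Nat.totient_pos.2 (NeZero.pos _)).ne'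
  exact (thueMorseSum_isBigO (hz.norm'_eq_one (NeZero.ne _)).le hφ (mod_cast hp.one_lt) hfix
    hprod).trans (isBigO_natCast_rpow_of_le logb_two_pow_totient_le)

end PrimePower

lemma sum_range_inv_pow_mul_pow {K : Type*} [Field K] {ω : K} {m l : ℕ}
    (hω : IsPrimitiveRoot ω m) (hl : l < m) (n : ℕ) :
    ∑ i ∈ range m, (ω ^ i)⁻¹ ^ l * (ω ^ i) ^ n = if n % m = l then (m : K) else 0 := by
  have hm : m ≠ 0 := by omega
  have hω0 : ω ≠ 0 := hω.ne_zero hm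
  have hgeom : ∑ i ∈ range m, (ω ^ i)⁻¹ ^ l * (ω ^ i) ^ n = ∑ i ∈ range m, (ω ^ n / ω ^ l) ^ i :=
    sum_congr rfl fun i _ => by
      rw [div_pow, inv_pow, pow_right_comm ω i l, pow_right_comm ω i n, div_eq_inv_mul]
  have hone : ω ^ n / ω ^ l = 1 ↔ n % m = l := by
    rw [div_eq_one_iff_eq (pow_ne_zero _ hω0), (hω.isOfFinOrder hm).pow_eq_pow_iff_modEq,
      ← hω.eq_orderOf, Nat.ModEq, Nat.mod_eq_of_lt hl]
  rw [hgeom]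
  split_ifs with h
  · simp [hone.2 h]
  · have hpow : (ω ^ n / ω ^ l) ^ m = 1 := by
      rw [div_pow, pow_right_comm, pow_right_comm ω l, hω.pow_eq_one, one_pow, one_pow, div_one]
    rw [geom_sum_eq (mt hone.1 h), hpow, sub_self, zero_div]

lemma natCast_mul_newmanSum {K : Type*} [Field K] {ω : K} {m l : ℕ} (hω : IsPrimitiveRoot ω m)
    (hl : l < m) (x : ℕ) :
    (m : K) * newmanSum m l x = ∑ i ∈ range m, (ω ^ i)⁻¹ ^ l * thueMorseSum (ω ^ i) x := by
  have hterm (n : ℕ) : (m : K) * (if n % m = l then thueMorseSign n else 0 : ℤ) =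
      ∑ i ∈ range m, (ω ^ i)⁻¹ ^ l * (thueMorseSign n * (ω ^ i) ^ n) := by
    simp only [mul_left_comm _ (thueMorseSign n : K), ← mul_sum, sum_range_inv_pow_mul_pow hω hl]
    split_ifs <;> simp [mul_comm]
  calc (m : K) * newmanSum m l x
      = ∑ n ∈ range x, (m : K) * (if n % m = l then thueMorseSign n else 0 : ℤ) := by
        simp only [newmanSum, thueMorseSign, Int.cast_sum, mul_sum]
    _ = ∑ i ∈ range m, (ω ^ i)⁻¹ ^ l * thueMorseSum (ω ^ i) x := by
        simp only [hterm, thueMorseSum, mul_sum]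
        exact sum_comm

lemma newmanSum_prime_pow_isBigO {p k l : ℕ} [Fact p.Prime]
    (h2 : orderOf (2 : ZMod (p ^ k)) = φ (p ^ k)) (hl : l < p ^ k) :
    (fun n => (newmanSum (p ^ k) l n : ℂ)) =O[atTop]
      fun n : ℕ => (n : ℝ) ^ Real.logb (2 ^ (p - 1)) p := by
  have hp : p.Prime := Fact.out
  have : NeZero p := ⟨hp.ne_zero⟩
  obtain ⟨ω, hω⟩ : ∃ ω : ℂ, IsPrimitiveRoot ω (p ^ k) :=
    ⟨_, Complex.isPrimitiveRoot_exp _ (NeZero.ne _)⟩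
  have hroot (i : ℕ) : thueMorseSum (ω ^ i) =O[atTop]
      fun n : ℕ => (n : ℝ) ^ Real.logb (2 ^ (p - 1)) p := by
    have hdvd : orderOf (ω ^ i) ∣ p ^ k :=
      orderOf_dvd_of_pow_eq_one (by rw [pow_right_comm, hω.pow_eq_one, one_pow])
    obtain ⟨j, hj, hord⟩ := (Nat.dvd_prime_pow hp).1 hdvd
    refine thueMorseSum_isBigO_of_isPrimitiveRoot (hord ▸ IsPrimitiveRoot.orderOf (ω ^ i)) ?_
    exact_mod_cast orderOf_eq_totient_of_dvd (g := 2) (pow_dvd_pow p hj) (mod_cast h2)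
  have hm : ((p ^ k : ℕ) : ℂ) ≠ 0 := mod_cast NeZero.ne (p ^ k)
  rw [← isBigO_const_mul_left_iff hm]
  simp only [natCast_mul_newmanSum hω hl]
  exact IsBigO.fun_sum fun i _ => (hroot i).const_mul_left _

theorem stmt_12_general {p k l : ℕ} [Fact p.Prime]
    (h2 : orderOf (2 : ZMod (p ^ k)) = φ (p ^ k)) (hl : l < p ^ k) :
    ∃ C : ℝ, 0 < C ∧ ∀ n : ℕ, 1 ≤ n →
      (|newmanSum (p ^ k) l n| : ℝ) ≤ C * (n : ℝ) ^ Real.logb (2 ^ (p - 1)) p := by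
  obtain ⟨C, hC, hbound⟩ := bound_of_isBigO_nat_atTop (newmanSum_prime_pow_isBigO h2 hl)
  refine ⟨C, hC, fun n hn => ?_⟩
  have hpos : 0 < (n : ℝ) ^ Real.logb (2 ^ (p - 1)) p := Real.rpow_pos_of_pos (mod_cast hn) _
  simpa only [Complex.norm_intCast, Real.norm_of_nonneg hpos.le] using hbound hpos.ne'

lemma orderOf_two_zmod_nine : orderOf (2 : ZMod (3 ^ 2)) = φ (3 ^ 2) := by
  rw [show φ (3 ^ 2) = 6 by decide, orderOf_eq_iff (by norm_num)]
  decide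

theorem stmt_12 :
    ∃ C : ℝ, 0 < C ∧ ∀ n : ℕ, 1 ≤ n →
      (|newmanSum 9 0 n| : ℝ) ≤ C * (n : ℝ) ^ (Real.log 3 / Real.log 4) := by
  have hexp : Real.logb (2 ^ (3 - 1)) (3 : ℕ) = Real.log 3 / Real.log 4 := by norm_num [Real.logb]
  simpa only [hexp, Nat.reducePow] using
    stmt_12_general (l := 0) orderOf_two_zmod_nine (by norm_num)
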